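/- Let N be a positive integer, a an integer, N_a the largest divisor of N coprime to a, and α a natural number. Then X^α − 1 lies in the ideal Ideal.span {(X − a)(X − 1), (Y − a)(Y − 1)} of R_N if and only if N_a divides the integer G_α = ∑_{m=0}^{α−1} a^m. -/

import Mathlib

/-- The Laurent polynomial ring `(ZMod N)[X^{±1}, Y^{±1}]`. -/
abbrev RR (N : ℕ) : Type := AddMonoidAlgebra (ZMod N) (ℤ × ℤ)

/-- The monomial `X`. -/
noncomputable def Xv (N : ℕ) : RR N := AddMonoidAlgebra.single ((1 : ℤ), (0 : ℤ)) 1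

/-- The monomial `Y`. -/
noncomputable def Yv (N : ℕ) : RR N := AddMonoidAlgebra.single ((0 : ℤ), (1 : ℤ)) 1

/-- A number all of whose prime factors divide `a` divides a power of `a`. -/
theorem exists_natCast_dvd_pow (a : ℤ) (M : ℕ) (hM : M ≠ 0)
    (h : ∀ p : ℕ, p.Prime → p ∣ M → (p : ℤ) ∣ a) : ∃ k : ℕ, (M : ℤ) ∣ a ^ k := by
  induction M using induction_on_primes with
  | zero => exact absurd rfl hM
  | one => exact ⟨0, by simp⟩
  | prime_mul p m hp ih =>
    obtain ⟨k, hk⟩ := ih (right_ne_zero_of_mul hM) fun q hq hqm => h q hq (hqm.mul_left p)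
    refine ⟨k + 1, ?_⟩
    rw [pow_succ', Nat.cast_mul]
    exact mul_dvd_mul (h p hp (dvd_mul_right p m)) hk

/-- The cofactor of the largest divisor of `N` coprime to `a` divides a power of `a`. -/
theorem exists_cofactor_dvd_pow {N Na M : ℕ} (hN : 0 < N) (hM : N = Na * M) {a : ℤ}
    (hcop : IsCoprime (Na : ℤ) a)
    (hmax : ∀ d : ℕ, d ∣ N → IsCoprime (d : ℤ) a → d ≤ Na) :
    ∃ k : ℕ, (M : ℤ) ∣ a ^ k := by
  subst hM
  refine exists_natCast_dvd_pow a M (Nat.pos_of_mul_pos_left hN).ne' fun p hp hpM => ?_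
  by_contra hpa
  have hpc : IsCoprime (p : ℤ) a :=
    (Prime.coprime_iff_not_dvd (Nat.prime_iff_prime_int.mp hp)).mpr hpa
  have hle := hmax (Na * p) (mul_dvd_mul_left Na hpM)
    (by rw [Nat.cast_mul]; exact hcop.mul_left hpc)
  have hpos : 0 < Na := Nat.pos_of_mul_pos_right hN
  nlinarith [hp.two_le]

section CommRing

variable {R : Type*} [CommRing R]

theorem dvd_pow_sub_one_sub_sum_mul (x a : R) (n : ℕ) :
    (x - a) * (x - 1) ∣ x ^ n - 1 - (∑ m ∈ Finset.range n, a ^ m) * (x - 1) := by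
  rw [← geom_sum_mul x n, ← sub_mul, ← Finset.sum_sub_distrib]
  exact mul_dvd_mul_right (Finset.dvd_sum fun m _ => sub_dvd_pow_sub_pow x a m) _

theorem dvd_pow_sub_one_of_sum_mul_pow_eq_zero {x a : R} (hx : IsUnit x) {n k : ℕ}
    (h : (∑ m ∈ Finset.range n, a ^ m) * a ^ k = 0) :
    (x - a) * (x - 1) ∣ x ^ n - 1 := by
  have hk : (x - a) * (x - 1) ∣ (x ^ k - a ^ k) * (x - 1) :=
    mul_dvd_mul_right (sub_dvd_pow_sub_pow x a k) _
  have hsum := ((dvd_pow_sub_one_sub_sum_mul x a n).mul_left (x ^ k)).add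
    (hk.mul_left (∑ m ∈ Finset.range n, a ^ m))
  refine ((hx.pow k).dvd_mul_left (b := x ^ n - 1)).mp ?_
  convert hsum using 1
  linear_combination (x - 1) * h

/-- An upper triangular matrix with eigenvalues `1` and `a`. -/
def jordanLike (a : R) : Matrix (Fin 2) (Fin 2) R := !![1, 1; 0, a]

theorem jordanLike_sub_mul_sub (a : R) :
    (jordanLike a - Matrix.scalar (Fin 2) a) * (jordanLike a - 1) = 0 := by
  ext i j
  fin_cases i <;> fin_cases j <;>
    simp [jordanLike, Matrix.mul_apply, Fin.sum_univ_two]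

theorem jordanLike_pow (a : R) (n : ℕ) :
    jordanLike a ^ n = !![1, ∑ m ∈ Finset.range n, a ^ m; 0, a ^ n] := by
  induction n with
  | zero => simp [Matrix.one_fin_two]
  | succ n ih =>
    rw [pow_succ', ih, jordanLike]
    ext i j
    fin_cases i <;> fin_cases j <;>
      simp [Matrix.mul_apply, Fin.sum_univ_two, pow_succ', Finset.sum_range_succ]

theorem isUnit_jordanLike {a : R} (ha : IsUnit a) : IsUnit (jordanLike a) := by
  rw [Matrix.isUnit_iff_isUnit_det]
  simpa [jordanLike, Matrix.det_fin_two] using ha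

end CommRing

theorem isUnit_Xv (N : ℕ) : IsUnit (Xv N) := by
  refine IsUnit.of_mul_eq_one (AddMonoidAlgebra.single (-1, 0) 1) ?_
  simp [Xv, AddMonoidAlgebra.single_mul_single, AddMonoidAlgebra.one_def, Prod.zero_eq_mk]

/-- Evaluation of Laurent polynomials over `ZMod N` at `X = u`, `Y = 1`, for an invertible
matrix `u` over `ZMod d` with `d ∣ N`. -/
noncomputable def evalUnit {N d : ℕ} (hd : d ∣ N) (u : (Matrix (Fin 2) (Fin 2) (ZMod d))ˣ) :
    RR N →+* Matrix (Fin 2) (Fin 2) (ZMod d) :=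
  AddMonoidAlgebra.liftNCRingHom
    ((Matrix.scalar (Fin 2)).comp (ZMod.castHom hd (ZMod d)))
    ((Units.coeHom _).comp ((zpowersHom _ u).comp
      (AddMonoidHom.toMultiplicative (AddMonoidHom.fst ℤ ℤ))))
    fun _ _ => Matrix.scalar_commute _ (fun r => Commute.all _ r) _

theorem evalUnit_Xv {N d : ℕ} (hd : d ∣ N) (u : (Matrix (Fin 2) (Fin 2) (ZMod d))ˣ) :
    evalUnit hd u (Xv N) = u := by
  simp [evalUnit, Xv, AddMonoidAlgebra.liftNCRingHom, -ZMod.castHom_apply, map_one,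
    -Matrix.scalar_apply]

theorem evalUnit_Yv {N d : ℕ} (hd : d ∣ N) (u : (Matrix (Fin 2) (Fin 2) (ZMod d))ˣ) :
    evalUnit hd u (Yv N) = 1 := by
  simp [evalUnit, Yv, AddMonoidAlgebra.liftNCRingHom, -ZMod.castHom_apply, map_one,
    -Matrix.scalar_apply]

/-- Mobility condition for the Delfino–Chamon–You model `BB_N((X-a)(X-1), (Y-a)(Y-1))`:
`X^α - 1` lies in the defining ideal iff `N_a` divides `G_α = ∑_{m<α} a^m`. -/
theorem stmt13 (N : ℕ) (hN : 0 < N) (a : ℤ) (Na : ℕ)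
    (hNa_dvd : Na ∣ N) (hNa_cop : IsCoprime (Na : ℤ) a)
    (hNa_max : ∀ d : ℕ, d ∣ N → IsCoprime ((d : ℤ)) a → d ≤ Na)
    (α : ℕ) :
    (Xv N ^ α - 1 ∈ Ideal.span
        {(Xv N - (a : RR N)) * (Xv N - 1), (Yv N - (a : RR N)) * (Yv N - 1)}) ↔
      (Na : ℤ) ∣ ∑ m ∈ Finset.range α, a ^ m := by
  constructor
  · intro h
    have ha : IsUnit (a : ZMod Na) := (ZMod.coe_int_isUnit_iff_isCoprime a Na).mpr hNa_cop
    obtain ⟨u, hu⟩ := isUnit_jordanLike ha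
    obtain ⟨c, d, hcd⟩ := Ideal.mem_span_pair.mp h
    have hrel := jordanLike_sub_mul_sub (a : ZMod Na)
    rw [map_intCast] at hrel
    have heval := congrArg (evalUnit hNa_dvd u) hcd
    simp only [map_add, map_mul, map_sub, map_pow, map_one, map_intCast, evalUnit_Xv,
      evalUnit_Yv, hu, hrel, sub_self, mul_zero, add_zero, jordanLike_pow] at heval
    have hentry := congrFun (congrFun heval 0) 1
    rw [← ZMod.intCast_zmod_eq_zero_iff_dvd]
    simpa using hentry.symm
  · intro h
    obtain ⟨M, hM⟩ := hNa_dvd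
    obtain ⟨k, hk⟩ := exists_cofactor_dvd_pow hN hM hNa_cop hNa_max
    have hdvd : (N : ℤ) ∣ (∑ m ∈ Finset.range α, a ^ m) * a ^ k := by
      rw [hM, Nat.cast_mul]
      exact mul_dvd_mul h hk
    have hzero : (∑ m ∈ Finset.range α, (a : RR N) ^ m) * (a : RR N) ^ k = 0 := by
      have hz := congrArg (algebraMap (ZMod N) (RR N))
        ((ZMod.intCast_zmod_eq_zero_iff_dvd _ N).mpr hdvd)
      rw [map_intCast, map_zero] at hz
      exact_mod_cast hz
    exact Ideal.mem_of_dvd _ (dvd_pow_sub_one_of_sum_mul_pow_eq_zero (isUnit_Xv N) hzero)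
      (Ideal.subset_span (Set.mem_insert _ _))
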